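/- arXiv:1310.2524 — 2 statements merged into one kernel-verified Lean document; each statement's English description precedes it below -/
import Mathlib

section
/- Let H be a complex Hilbert space and let A and Q be bounded linear operators on H such that AQ = QA and Q is s.o.t.-quasinilpotent. Then AQ is s.o.t.-quasinilpotent. -/
/-!
Since `A` and `Q` commute, `(AQ)*ⁿ(AQ)ⁿ = Q*ⁿ(A*ⁿAⁿ)Qⁿ ≤ ‖A‖²ⁿ Q*ⁿQⁿ`. The function `t ↦ t^{1/n}` is
operator monotone (Löwner–Heinz), so `Sₙ ≤ ‖A‖² Tₙ` (`root_mul_le`), where `Sₙ` and `Tₙ` are the `n`-th roots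
attached to `AQ` and `Q`. Hence `⟨Sₙξ, ξ⟩ ≤ ‖A‖² ⟨Tₙξ, ξ⟩ → 0`. As `‖Sₙ‖ ≤ ‖AQ‖²` (`norm_root_le`) is bounded,
the inequality `‖Sξ‖² ≤ ‖S‖ ⟨Sξ, ξ⟩` for positive `S` (`norm_apply_sq_le_of_nonneg`) upgrades this to `Sₙξ → 0` in norm.
-/

open scoped NNReal

/-- A bounded operator `Q` on a complex Hilbert space is s.o.t.-quasinilpotent if
`((Q*)ⁿQⁿ)^{1/n} → 0` in the strong operator topology, the `n`-th roots being taken via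
continuous functional calculus. -/
def SotQuasinilpotent {H : Type*} [NormedAddCommGroup H] [InnerProductSpace ℂ H]
    [CompleteSpace H] (Q : H →L[ℂ] H) : Prop :=
  ∀ ξ : H, Filter.Tendsto
    (fun n : ℕ =>
      (CFC.nnrpow ((ContinuousLinearMap.adjoint Q) ^ n * Q ^ n) ((n : ℝ≥0)⁻¹)) ξ)
    Filter.atTop (nhds 0)

section Aux

variable {H : Type*} [NormedAddCommGroup H] [InnerProductSpace ℂ H] [CompleteSpace H]

open ContinuousLinearMap

/-- The form of Cauchy–Schwarz for the semi-inner product `⟨S·, ·⟩` that is obtained by factoring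
`S` through its square root. -/
lemma norm_apply_sq_le_of_nonneg {S : H →L[ℂ] H} (hS : 0 ≤ S) (ξ : H) :
    ‖S ξ‖ ^ 2 ≤ ‖S‖ * (inner ℂ (S ξ) ξ).re := by
  set R := CFC.sqrt S with hR
  have hRsa : IsSelfAdjoint R := (CFC.sqrt_nonneg S).isSelfAdjoint
  have hRR : R * R = S := CFC.sqrt_mul_sqrt_self S hS
  have hadj : adjoint R = R := hRsa
  have h1 : (inner ℂ (S ξ) ξ).re = ‖R ξ‖ ^ 2 := by
    have h : inner ℂ (S ξ) ξ = inner ℂ (R ξ) (R ξ) := by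
      rw [← hRR, mul_apply_eq_comp, ← adjoint_inner_right, hadj]
    rw [h, inner_self_eq_norm_sq_to_K]
    norm_cast
  have h2 : ‖S‖ = ‖R‖ ^ 2 := by
    rw [← hRR, sq]
    have := CStarRing.norm_star_mul_self (x := R)
    rwa [hRsa.star_eq] at this
  have h3 : S ξ = R (R ξ) := by rw [← hRR]; rfl
  rw [h1, h2, h3, ← mul_pow]
  exact pow_le_pow_left₀ (norm_nonneg _) (R.le_opNorm _) 2

lemma adjoint_pow_mul_pow (P : H →L[ℂ] H) (n : ℕ) :
    adjoint P ^ n * P ^ n = star (P ^ n) * P ^ n := by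
  rw [star_pow, star_eq_adjoint]

lemma adjoint_pow_mul_pow_nonneg (P : H →L[ℂ] H) (n : ℕ) : 0 ≤ adjoint P ^ n * P ^ n := by
  rw [adjoint_pow_mul_pow]
  exact star_mul_self_nonneg _

lemma norm_star_pow_mul_pow_le (P : H →L[ℂ] H) {n : ℕ} (hn : 0 < n) :
    ‖star (P ^ n) * P ^ n‖ ≤ (‖P‖ ^ 2) ^ n := by
  rw [CStarRing.norm_star_mul_self, ← sq, ← pow_mul, mul_comm 2 n, pow_mul]
  exact pow_le_pow_left₀ (norm_nonneg _) (norm_pow_le' P hn) 2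

lemma nnrpow_inv_pow_smul {B : H →L[ℂ] H} (hB : 0 ≤ B) {c : ℝ} (hc : 0 ≤ c) {n : ℕ} (hn : 0 < n) :
    (c ^ n • B) ^ ((n : ℝ≥0)⁻¹) = c • B ^ ((n : ℝ≥0)⁻¹) := by
  have hn' : (n : ℝ≥0) ≠ 0 := by exact_mod_cast hn.ne'
  have hpow : ∀ X : H →L[ℂ] H, 0 ≤ X → X ^ (n : ℝ≥0) = X ^ n := fun X hX => by
    rw [CFC.nnrpow_eq_rpow (by positivity)]
    exact CFC.rpow_natCast X n hX
  have hR : 0 ≤ B ^ ((n : ℝ≥0)⁻¹) := CFC.nnrpow_nonneg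
  have hcR : 0 ≤ c • B ^ ((n : ℝ≥0)⁻¹) := smul_nonneg hc hR
  rw [CFC.nnrpow_inv_eq _ _ hn' (smul_nonneg (pow_nonneg hc n) hB) hcR, hpow _ hcR, smul_pow,
    ← hpow _ hR, CFC.nnrpow_inv_nnrpow B hn' hB]

lemma norm_root_le (P : H →L[ℂ] H) {n : ℕ} (hn : 0 < n) :
    ‖(adjoint P ^ n * P ^ n) ^ ((n : ℝ≥0)⁻¹)‖ ≤ ‖P‖ ^ 2 := by
  rw [CFC.norm_nnrpow _ (by positivity) (adjoint_pow_mul_pow_nonneg P n), adjoint_pow_mul_pow]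
  calc ‖star (P ^ n) * P ^ n‖ ^ (((n : ℝ≥0)⁻¹ : ℝ≥0) : ℝ)
      ≤ ((‖P‖ ^ 2) ^ n) ^ (((n : ℝ≥0)⁻¹ : ℝ≥0) : ℝ) :=
        Real.rpow_le_rpow (norm_nonneg _) (norm_star_pow_mul_pow_le P hn) (by positivity)
    _ = ‖P‖ ^ 2 := by
        push_cast
        exact Real.pow_rpow_inv_natCast (by positivity) hn.ne'

/-- The operator inequality `Sₙ ≤ ‖A‖² Tₙ`; the only place where commutation of `A` and `Q` enters. -/
lemma root_mul_le (A Q : H →L[ℂ] H) (hAQ : A * Q = Q * A) {n : ℕ} (hn : 0 < n) :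
    (adjoint (A * Q) ^ n * (A * Q) ^ n) ^ ((n : ℝ≥0)⁻¹) ≤
      ‖A‖ ^ 2 • (adjoint Q ^ n * Q ^ n) ^ ((n : ℝ≥0)⁻¹) := by
  rw [← nnrpow_inv_pow_smul (adjoint_pow_mul_pow_nonneg Q n) (by positivity) hn]
  refine CFC.nnrpow_le_nnrpow ⟨zero_le, ?_⟩ ?_
  · exact inv_le_one_of_one_le₀ (by exact_mod_cast hn)
  rw [adjoint_pow_mul_pow, adjoint_pow_mul_pow, (show Commute A Q from hAQ).mul_pow, star_mul]
  calc star (Q ^ n) * star (A ^ n) * (A ^ n * Q ^ n)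
      = star (Q ^ n) * (star (A ^ n) * A ^ n) * Q ^ n := by simp only [mul_assoc]
    _ ≤ ‖star (A ^ n) * A ^ n‖ • (star (Q ^ n) * Q ^ n) :=
        CStarAlgebra.star_left_conjugate_le_norm_smul (IsSelfAdjoint.star_mul_self _)
    _ ≤ (‖A‖ ^ 2) ^ n • (star (Q ^ n) * Q ^ n) :=
        smul_le_smul_of_nonneg_right (norm_star_pow_mul_pow_le A hn) (star_mul_self_nonneg _)

end Aux

/-- If `A` and `Q` are bounded operators on a complex Hilbert space, `AQ = QA`, and `Q` is
s.o.t.-quasinilpotent, then `AQ` is s.o.t.-quasinilpotent. -/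
theorem stmt_3 {H : Type*} [NormedAddCommGroup H] [InnerProductSpace ℂ H] [CompleteSpace H]
    (A Q : H →L[ℂ] H) (hAQ : A * Q = Q * A) (hQ : SotQuasinilpotent Q) :
    SotQuasinilpotent (A * Q) := by
  intro ξ
  have hT := hQ ξ
  simp only [CFC.nnrpow_eq_pow] at hT ⊢
  set S : ℕ → H →L[ℂ] H := fun n =>
    (ContinuousLinearMap.adjoint (A * Q) ^ n * (A * Q) ^ n) ^ ((n : ℝ≥0)⁻¹) with hS
  set T : ℕ → H →L[ℂ] H := fun n =>
    (ContinuousLinearMap.adjoint Q ^ n * Q ^ n) ^ ((n : ℝ≥0)⁻¹) with hTdef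
  have hbound : ∀ n : ℕ, 0 < n →
      ‖S n ξ‖ ^ 2 ≤ ‖A * Q‖ ^ 2 * (‖A‖ ^ 2 * (‖T n ξ‖ * ‖ξ‖)) := by
    intro n hn
    have hS0 : 0 ≤ S n := CFC.nnrpow_nonneg
    have hinner0 : 0 ≤ (inner ℂ (S n ξ) ξ).re :=
      ((ContinuousLinearMap.nonneg_iff_isPositive _).1 hS0).re_inner_nonneg_left ξ
    have hle : (inner ℂ (S n ξ) ξ).re ≤ ‖A‖ ^ 2 * (inner ℂ (T n ξ) ξ).re := by
      have h := ((ContinuousLinearMap.le_def _ _).1 (root_mul_le A Q hAQ hn)).re_inner_nonneg_left ξ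
      change 0 ≤ (inner ℂ ((‖A‖ ^ 2 • T n - S n) ξ) ξ).re at h
      rw [sub_apply, smul_apply, inner_sub_left, ← Complex.coe_smul (‖A‖ ^ 2) (T n ξ),
        inner_smul_left, Complex.conj_ofReal, Complex.sub_re, Complex.re_ofReal_mul] at h
      linarith
    calc ‖S n ξ‖ ^ 2 ≤ ‖S n‖ * (inner ℂ (S n ξ) ξ).re := norm_apply_sq_le_of_nonneg hS0 ξ
      _ ≤ ‖A * Q‖ ^ 2 * (‖A‖ ^ 2 * (‖T n ξ‖ * ‖ξ‖)) := by
        refine mul_le_mul (norm_root_le (A * Q) hn) (hle.trans ?_) hinner0 (by positivity)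
        gcongr
        exact re_inner_le_norm (𝕜 := ℂ) _ _
  have hlim : Filter.Tendsto (fun n => ‖A * Q‖ ^ 2 * (‖A‖ ^ 2 * (‖T n ξ‖ * ‖ξ‖)))
      Filter.atTop (nhds 0) := by
    simpa using ((hT.norm.mul_const ‖ξ‖).const_mul (‖A‖ ^ 2)).const_mul (‖A * Q‖ ^ 2)
  have hsq : Filter.Tendsto (fun n => ‖S n ξ‖ ^ 2) Filter.atTop (nhds 0) :=
    squeeze_zero' (Filter.Eventually.of_forall fun n => by positivity)
      ((Filter.eventually_gt_atTop 0).mono hbound) hlim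
  rw [tendsto_zero_iff_norm_tendsto_zero]
  simpa [Real.sqrt_sq (norm_nonneg _)] using hsq.sqrt
end

section
/- Let H be a complex Hilbert space and let A and Q be bounded linear operators on H such that AQ = QA. Then for every natural number n ≥ 2 and every vector ξ ∈ H, one has ‖(((AQ)*)ⁿ(AQ)ⁿ)^{1/n} ξ‖² ≤ ‖A‖⁴ ‖((Q*)ⁿQⁿ)^{1/n} ξ‖², where the n-th roots of the positive operators are taken via continuous functional calculus. -/
open scoped NNReal

/-!
Since `A` and `Q` commute, `(AQ)ⁿ = AⁿQⁿ`, so with `S = (Q*)ⁿQⁿ` and `T = ((AQ)*)ⁿ(AQ)ⁿ` the bound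
`(A*)ⁿAⁿ ≤ ‖A‖²ⁿ` gives `T ≤ ‖A‖²ⁿ S = Rⁿ`, where `R = ‖A‖² S^{1/n}` (`star_pow_mul_pow_le`).
As `n ≥ 2`, the function `t ↦ t^{2/n}` is operator monotone (Löwner–Heinz), whence
`(T^{1/n})² = T^{2/n} ≤ (Rⁿ)^{2/n} = R²` (`nnrpow_inv_mul_self_le`). Taking the quadratic form of
both sides at `ξ` gives `‖T^{1/n} ξ‖² ≤ ‖R ξ‖² = ‖A‖⁴ ‖S^{1/n} ξ‖²`
(`norm_apply_sq_le_of_mul_self_le`).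
-/

/-- For a positive element, the non-unital power with exponent `(n : ℝ≥0)` is the monoid power. -/
lemma nnrpow_natCast_eq_pow {B : Type*} [CStarAlgebra B] [PartialOrder B] [StarOrderedRing B]
    (a : B) (ha : 0 ≤ a) (n : ℕ) (hn : n ≠ 0) : a ^ (n : ℝ≥0) = a ^ n := by
  rw [CFC.nnrpow_eq_rpow (by positivity)]
  exact CFC.rpow_natCast a n ha

/-- The Löwner–Heinz step: the exponent `2 / n` is at most `1`. -/
lemma nnrpow_inv_mul_self_le {B : Type*} [CStarAlgebra B] [PartialOrder B] [StarOrderedRing B]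
    (T R : B) (hR : 0 ≤ R) (n : ℕ) (hn : 2 ≤ n) (h : T ≤ R ^ n) :
    T ^ (n : ℝ≥0)⁻¹ * T ^ (n : ℝ≥0)⁻¹ ≤ R * R := by
  have hn0 : (n : ℝ≥0) ≠ 0 := by positivity
  have hp : (n : ℝ≥0)⁻¹ * 2 ∈ Set.Icc (0 : ℝ≥0) 1 := by
    refine ⟨zero_le, ?_⟩
    rw [inv_mul_le_iff₀ (by positivity)]
    simpa using (by exact_mod_cast hn : (2 : ℝ≥0) ≤ n)
  calc T ^ (n : ℝ≥0)⁻¹ * T ^ (n : ℝ≥0)⁻¹ = T ^ ((n : ℝ≥0)⁻¹ * 2) := by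
        rw [← CFC.nnrpow_nnrpow, CFC.nnrpow_two _ CFC.nnrpow_nonneg]
    _ ≤ (R ^ n) ^ ((n : ℝ≥0)⁻¹ * 2) := CFC.nnrpow_le_nnrpow hp h
    _ = R * R := by
        rw [← nnrpow_natCast_eq_pow R hR n (by omega), CFC.nnrpow_nnrpow, ← mul_assoc,
          mul_inv_cancel₀ hn0, one_mul, CFC.nnrpow_two R hR]

lemma star_pow_mul_pow_le {B : Type*} [CStarAlgebra B] [PartialOrder B] [StarOrderedRing B]
    (A Q : B) (hAQ : A * Q = Q * A) (n : ℕ) :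
    star (A * Q) ^ n * (A * Q) ^ n ≤ (‖A‖ ^ (2 * n)) • (star Q ^ n * Q ^ n) := by
  have hA : star (A ^ n) * A ^ n ≤ algebraMap ℝ B (‖A‖ ^ (2 * n)) := by
    refine CStarAlgebra.star_mul_le_algebraMap_norm_sq.trans ?_
    rw [← sub_nonneg, ← map_sub]
    refine algebraMap_nonneg B (sub_nonneg.2 ?_)
    rcases Nat.eq_zero_or_pos n with rfl | hn
    · rcases subsingleton_or_nontrivial B with hB | hB
      · simp [Subsingleton.elim (1 : B) 0]
      · simp
    · calc ‖A ^ n‖ ^ 2 ≤ (‖A‖ ^ n) ^ 2 := by gcongr; exact norm_pow_le' A hn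
        _ = ‖A‖ ^ (2 * n) := by ring
  have h := star_left_conjugate_le_conjugate hA (Q ^ n)
  have e : star (A * Q) ^ n * (A * Q) ^ n = star (Q ^ n) * (star (A ^ n) * A ^ n) * Q ^ n := by
    rw [← star_pow, (show Commute A Q from hAQ).mul_pow, star_mul]
    simp only [mul_assoc]
  rw [e]
  refine h.trans_eq ?_
  rw [Algebra.algebraMap_eq_smul_one, mul_smul_comm, smul_mul_assoc, mul_one, star_pow]

lemma smul_nnrpow_inv_pow {B : Type*} [CStarAlgebra B] [PartialOrder B] [StarOrderedRing B]
    (S : B) (hS : 0 ≤ S) (c : ℝ) (n : ℕ) (hn : n ≠ 0) :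
    (c • S ^ (n : ℝ≥0)⁻¹) ^ n = (c ^ n) • S := by
  rw [smul_pow, ← nnrpow_natCast_eq_pow (S ^ (n : ℝ≥0)⁻¹) CFC.nnrpow_nonneg n hn,
    CFC.nnrpow_inv_nnrpow S (by positivity) hS]

/-- The inequality of `n`-th roots, squared, in an arbitrary C⋆-algebra. -/
lemma root_mul_root_le {B : Type*} [CStarAlgebra B] [PartialOrder B] [StarOrderedRing B]
    (A Q : B) (hAQ : A * Q = Q * A) (n : ℕ) (hn : 2 ≤ n) :
    (star (A * Q) ^ n * (A * Q) ^ n) ^ (n : ℝ≥0)⁻¹ *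
        (star (A * Q) ^ n * (A * Q) ^ n) ^ (n : ℝ≥0)⁻¹ ≤
      ((‖A‖ ^ 2) • (star Q ^ n * Q ^ n) ^ (n : ℝ≥0)⁻¹) *
        ((‖A‖ ^ 2) • (star Q ^ n * Q ^ n) ^ (n : ℝ≥0)⁻¹) := by
  have hS0 : 0 ≤ star Q ^ n * Q ^ n := by rw [← star_pow]; exact star_mul_self_nonneg _
  refine nnrpow_inv_mul_self_le _ _ (smul_nonneg (by positivity) CFC.nnrpow_nonneg) n hn ?_
  rw [smul_nnrpow_inv_pow _ hS0 _ n (by omega), ← pow_mul]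
  exact star_pow_mul_pow_le A Q hAQ n

/-- The quadratic form of `P * P` at `ξ` is `‖P ξ‖ ^ 2` for positive `P`, so an inequality between
the squares of positive operators is an inequality between the norms of their values. -/
lemma norm_apply_sq_le_of_mul_self_le {H : Type*} [NormedAddCommGroup H] [InnerProductSpace ℂ H]
    [CompleteSpace H] (P R : H →L[ℂ] H) (hP : 0 ≤ P) (hR : 0 ≤ R) (h : P * P ≤ R * R) (ξ : H) :
    ‖P ξ‖ ^ 2 ≤ ‖R ξ‖ ^ 2 := by
  have key (P : H →L[ℂ] H) (hP : 0 ≤ P) : RCLike.re (inner ℂ ((P * P) ξ) ξ) = ‖P ξ‖ ^ 2 := by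
    have hsa : ContinuousLinearMap.adjoint P = P := (IsSelfAdjoint.of_nonneg hP).star_eq
    have : inner ℂ (P (P ξ)) ξ = inner ℂ (P ξ) (P ξ) := by
      conv_lhs => rw [← ContinuousLinearMap.adjoint_inner_right, hsa]
    change RCLike.re (inner ℂ (P (P ξ)) ξ) = _
    rw [this, inner_self_eq_norm_sq]
  have hq := ((ContinuousLinearMap.le_def _ _).1 h).re_inner_nonneg_left ξ
  rwa [sub_apply, inner_sub_left, map_sub, sub_nonneg, key P hP, key R hR] at hq

/-- If `A` and `Q` are bounded operators on a complex Hilbert space with `AQ = QA`, then for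
every `n ≥ 2` and every `ξ ∈ H`,
`‖(((AQ)*)ⁿ(AQ)ⁿ)^{1/n} ξ‖² ≤ ‖A‖⁴ ‖((Q*)ⁿQⁿ)^{1/n} ξ‖²`. -/
theorem stmt_6 {H : Type*} [NormedAddCommGroup H] [InnerProductSpace ℂ H] [CompleteSpace H]
    (A Q : H →L[ℂ] H) (hAQ : A * Q = Q * A) (n : ℕ) (hn : 2 ≤ n) (ξ : H) :
    ‖(CFC.nnrpow ((ContinuousLinearMap.adjoint (A * Q)) ^ n * (A * Q) ^ n) ((n : ℝ≥0)⁻¹)) ξ‖ ^ 2 ≤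
      ‖A‖ ^ 4 *
        ‖(CFC.nnrpow ((ContinuousLinearMap.adjoint Q) ^ n * Q ^ n) ((n : ℝ≥0)⁻¹)) ξ‖ ^ 2 := by
  have h := root_mul_root_le A Q hAQ n hn
  have hT : 0 ≤ (star (A * Q) ^ n * (A * Q) ^ n) ^ (n : ℝ≥0)⁻¹ := CFC.nnrpow_nonneg
  have hS : 0 ≤ (star Q ^ n * Q ^ n) ^ (n : ℝ≥0)⁻¹ := CFC.nnrpow_nonneg
  simp only [← ContinuousLinearMap.star_eq_adjoint, CFC.nnrpow_eq_pow]
  generalize (star (A * Q) ^ n * (A * Q) ^ n) ^ (n : ℝ≥0)⁻¹ = P at h hT ⊢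
  generalize (star Q ^ n * Q ^ n) ^ (n : ℝ≥0)⁻¹ = R at h hS ⊢
  have hR : 0 ≤ (‖A‖ ^ 2) • R := smul_nonneg (by positivity) hS
  refine (norm_apply_sq_le_of_mul_self_le P _ hT hR h ξ).trans_eq ?_
  rw [smul_apply, norm_smul, Real.norm_of_nonneg (by positivity), mul_pow, ← pow_mul]
end
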